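/- arXiv:1501.07122 — 6 statements merged into one kernel-verified Lean document; each statement's English description precedes it below -/
import Mathlib

section
/- Let φ : ℝ × ℝⁿ → ℝⁿ be a flow that is σ-reversible for an involution σ, and let z⁺ be a periodic point with minimal period T > 0 (φ(T,z⁺) = z⁺ and φ(t,z⁺) ≠ z⁺ for 0 < t < T). If the orbit γ = {φ(t, z⁺) : t ∈ ℝ} contains two distinct σ-related points (there exist t₁, t₂ with φ(t₁,z⁺) ≠ φ(t₂,z⁺) and σ(φ(t₁,z⁺)) = φ(t₂,z⁺)), then γ contains two distinct σ-fixed points: there exist w₁, w₂ ∈ γ with w₁ ≠ w₂, σ(w₁) = w₁ and σ(w₂) = w₂. -/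
/-!
On an orbit through `z` that contains two `σ`-related points `t₁ +ᵥ z` and `t₂ +ᵥ z`, reversibility
forces `σ` to act as the reflection `s ↦ t₁ + t₂ - s` of time. On a line this reflection fixes only
the midpoint `c = (t₁ + t₂) / 2`, but on a circle of length `T` it also fixes the antipode
`c + T / 2`.
-/

open AddAction Function

section Reversible

variable {G X : Type*} [AddCommGroup G] [AddAction G X] {σ : X → X} {x : X} {t₁ t₂ : G}

variable (G) in
/-- `σ` is a reversing symmetry of the flow `(t, x) ↦ t +ᵥ x` with times in `G`: it conjugates the
flow to the time-reversed flow. A flow is encoded as an additive action of the group of times. -/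
def IsReversible (σ : X → X) : Prop :=
  ∀ (t : G) (x : X), σ (t +ᵥ x) = -t +ᵥ σ x

theorem IsReversible.map_vadd_eq_sub_vadd (hσ : IsReversible G σ) (h : σ (t₁ +ᵥ x) = t₂ +ᵥ x)
    (s : G) : σ (s +ᵥ x) = (t₁ + t₂ - s) +ᵥ x :=
  calc
    σ (s +ᵥ x) = σ ((s - t₁) +ᵥ t₁ +ᵥ x) := by rw [vadd_vadd, sub_add_cancel]
    _ = -(s - t₁) +ᵥ t₂ +ᵥ x := by rw [hσ, h]
    _ = (t₁ + t₂ - s) +ᵥ x := by rw [vadd_vadd, neg_sub, sub_add_eq_add_sub]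

theorem IsReversible.isFixedPt_vadd_iff (hσ : IsReversible G σ) (h : σ (t₁ +ᵥ x) = t₂ +ᵥ x)
    {s : G} : IsFixedPt σ (s +ᵥ x) ↔ (t₁ + t₂) +ᵥ x = (s + s) +ᵥ x := by
  rw [IsFixedPt, hσ.map_vadd_eq_sub_vadd h, ← vadd_left_cancel_iff s, vadd_vadd, vadd_vadd,
    add_sub_cancel]

end Reversible

theorem reversible_cycle_two_fixed_points_general {K X : Type*} [Field K] [NeZero (2 : K)]
    [AddAction K X] {σ : X → X} (hσ : IsReversible K σ) {z : X} {T : K} (hper : T +ᵥ z = z)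
    (hhalf : (T / 2) +ᵥ z ≠ z) (hrel : ∃ w ∈ orbit K z, σ w ∈ orbit K z) :
    ∃ w₁ w₂ : X, w₁ ∈ orbit K z ∧ w₂ ∈ orbit K z ∧ w₁ ≠ w₂ ∧ IsFixedPt σ w₁ ∧ IsFixedPt σ w₂ := by
  obtain ⟨_, ⟨t₁, rfl⟩, t₂, h⟩ := hrel
  let c := (t₁ + t₂) / 2
  have hc : c + c = t₁ + t₂ := add_halves _
  have hne : c +ᵥ z ≠ (c + T / 2) +ᵥ z := by
    rw [add_vadd, Ne, vadd_left_cancel_iff]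
    exact hhalf.symm
  have hfix : IsFixedPt σ (c +ᵥ z) := (hσ.isFixedPt_vadd_iff h.symm).2 (by rw [hc])
  have hfix' : IsFixedPt σ ((c + T / 2) +ᵥ z) := by
    refine (hσ.isFixedPt_vadd_iff h.symm).2 ?_
    rw [add_add_add_comm, hc, add_halves, add_vadd _ T, hper]
  exact ⟨c +ᵥ z, (c + T / 2) +ᵥ z, mem_orbit _ _, mem_orbit _ _, hne, hfix, hfix'⟩

theorem reversible_cycle_two_fixed_points
    {n : ℕ} (φ : ℝ → (Fin n → ℝ) → (Fin n → ℝ)) (σ : (Fin n → ℝ) → (Fin n → ℝ))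
    (hφ0 : ∀ z, φ 0 z = z)
    (hφadd : ∀ s t z, φ (s + t) z = φ s (φ t z))
    (hinv : ∀ z, σ (σ z) = z)
    (hrev : ∀ t z, σ (φ t z) = φ (-t) (σ z))
    (zplus : Fin n → ℝ) (T : ℝ) (hT : 0 < T)
    (hper : φ T zplus = zplus)
    (hmin : ∀ t, 0 < t → t < T → φ t zplus ≠ zplus)
    (hrel : ∃ t₁ t₂ : ℝ, φ t₁ zplus ≠ φ t₂ zplus ∧ σ (φ t₁ zplus) = φ t₂ zplus) :
    ∃ w₁ w₂ : Fin n → ℝ,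
      w₁ ∈ Set.range (fun t => φ t zplus) ∧ w₂ ∈ Set.range (fun t => φ t zplus) ∧
      w₁ ≠ w₂ ∧ σ w₁ = w₁ ∧ σ w₂ = w₂ := by
  obtain ⟨t₁, t₂, -, h⟩ := hrel
  let _ : AddAction ℝ (Fin n → ℝ) := { vadd := φ, zero_vadd := hφ0, add_vadd := hφadd }
  exact reversible_cycle_two_fixed_points_general hrev hper
    (hmin (T / 2) (half_pos hT) (half_lt_self hT)) ⟨φ t₁ zplus, ⟨t₁, rfl⟩, t₂, h.symm⟩
end

section
/- Let φ : ℝ × ℝⁿ → ℝⁿ be a flow that is σ-reversible for an involution σ, and let z be a periodic point with minimal period T > 0, with orbit γ = {φ(t,z) : t ∈ ℝ}. Then σ(γ) = γ if and only if γ contains two distinct σ-related points, i.e. there exist t₁, t₂ with φ(t₁,z) ≠ φ(t₂,z) and σ(φ(t₁,z)) = φ(t₂,z). -/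
/-!
A reversing symmetry maps the orbit of `z` onto the orbit of `σ z`, so the orbit of `z` is invariant
exactly when `σ z = a +ᵥ z` for some time `a`; and it suffices to test this at any one point of the
orbit. In that case `σ` sends `r +ᵥ z` to `(-r + a) +ᵥ z`, which becomes `r +ᵥ s +ᵥ z` when
`a - s = r + r`. If time can be halved, `s` may be chosen freely, and any `s` that moves `z` makes
the two points distinct.
-/

open AddAction

section ReversingSymmetry

variable {G X : Type*} [AddGroup G] [AddAction G X] {σ : X → X} {z : X}

variable (G) in
/-- `σ` is a reversing symmetry of the flow `t ↦ (t +ᵥ ·)`: it conjugates the motion by time `t` to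
the motion by time `-t`. Time is an arbitrary additive group `G`. -/
def IsReversingSymmetry (σ : X → X) : Prop :=
  ∀ (t : G) (x : X), σ (t +ᵥ x) = -t +ᵥ σ x

namespace IsReversingSymmetry

theorem image_orbit (hσ : IsReversingSymmetry G σ) (z : X) :
    σ '' orbit G z = orbit G (σ z) :=
  calc
    σ '' orbit G z = Set.range (fun t : G => -t +ᵥ σ z) := by
      simp only [orbit, ← Set.range_comp, Function.comp_def, hσ _ z]
    _ = orbit G (σ z) := neg_surjective.range_comp (fun t : G => t +ᵥ σ z)

theorem image_orbit_eq_iff (hσ : IsReversingSymmetry G σ) :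
    σ '' orbit G z = orbit G z ↔ σ z ∈ orbit G z := by
  rw [hσ.image_orbit, orbit_eq_iff]

theorem map_vadd_mem_orbit_iff (hσ : IsReversingSymmetry G σ) (t : G) :
    σ (t +ᵥ z) ∈ orbit G z ↔ σ z ∈ orbit G z := by
  rw [hσ t z, ← orbit_eq_iff, orbit_vadd, orbit_eq_iff]

theorem exists_ne_and_map_vadd_eq (hσ : IsReversingSymmetry G σ) (hG : ∀ t : G, Even t)
    (hz : z ∉ fixedPoints G X) (hσz : σ z ∈ orbit G z) :
    ∃ t₁ t₂ : G, t₁ +ᵥ z ≠ t₂ +ᵥ z ∧ σ (t₁ +ᵥ z) = t₂ +ᵥ z := by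
  obtain ⟨a, ha : a +ᵥ z = σ z⟩ := hσz
  obtain ⟨s, hs⟩ : ∃ s : G, s +ᵥ z ≠ z := not_forall.mp hz
  obtain ⟨r, hr⟩ := hG (a - s)
  have ha_eq : a = r + (r + s) := by rw [← add_assoc, ← hr, sub_add_cancel]
  refine ⟨r, r + s, ?_, ?_⟩
  · rw [add_vadd]
    exact fun h => hs (vadd_left_cancel r h).symm
  · rw [hσ, ← ha, vadd_vadd, ha_eq, neg_add_cancel_left]

end IsReversingSymmetry

theorem reversible_cycle_invariant_iff_related_points_general
    (hσ : IsReversingSymmetry G σ) (hG : ∀ t : G, Even t) (hz : z ∉ fixedPoints G X) :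
    σ '' orbit G z = orbit G z ↔
      ∃ t₁ t₂ : G, t₁ +ᵥ z ≠ t₂ +ᵥ z ∧ σ (t₁ +ᵥ z) = t₂ +ᵥ z := by
  rw [hσ.image_orbit_eq_iff]
  constructor
  · exact hσ.exists_ne_and_map_vadd_eq hG hz
  · rintro ⟨t₁, t₂, -, h⟩
    exact (hσ.map_vadd_mem_orbit_iff t₁).mp (h ▸ mem_orbit z t₂)

end ReversingSymmetry

theorem reversible_cycle_invariant_iff_related_points
    {n : ℕ} (φ : ℝ → (Fin n → ℝ) → (Fin n → ℝ)) (σ : (Fin n → ℝ) → (Fin n → ℝ))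
    (hφ0 : ∀ z, φ 0 z = z)
    (hφadd : ∀ s t z, φ (s + t) z = φ s (φ t z))
    (hinv : ∀ z, σ (σ z) = z)
    (hrev : ∀ t z, σ (φ t z) = φ (-t) (σ z))
    (z : Fin n → ℝ) (T : ℝ) (hT : 0 < T)
    (hper : φ T z = z)
    (hmin : ∀ t, 0 < t → t < T → φ t z ≠ z) :
    σ '' (Set.range (fun t => φ t z)) = Set.range (fun t => φ t z) ↔
      ∃ t₁ t₂ : ℝ, φ t₁ z ≠ φ t₂ z ∧ σ (φ t₁ z) = φ t₂ z := by
  let _ : AddAction ℝ (Fin n → ℝ) := { vadd := φ, zero_vadd := hφ0, add_vadd := hφadd }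
  exact reversible_cycle_invariant_iff_related_points_general hrev Even.all
    (fun hz => hmin (T / 2) (half_pos hT) (half_lt_self hT) (hz (T / 2)))
end

section
/- Let φ : ℝ × ℝⁿ → ℝⁿ be a flow that is σ-symmetric for an involution σ, and let z⁺ be a periodic point with minimal period T > 0 (φ(T,z⁺) = z⁺ and φ(t,z⁺) ≠ z⁺ for 0 < t < T). If the orbit of z⁺ contains two distinct σ-related points (there exists t with σ(z⁺) = φ(t, z⁺) ≠ z⁺), then for every point z on the orbit, σ(z) = φ(T/2, z). -/
/-!
The times fixing a point `x` of minimal period `T` are exactly the integer multiples of `T`. If `σ`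
sends `x` to `t +ᵥ x ≠ x`, then applying `σ` twice shows that `2 • t` is such a time while `t`
itself is not. So `t` is an odd multiple of the half period, `σ` acts on `x` as the shift by half a
period, and by symmetry it does so on the whole orbit.
-/

open AddAction AddSubgroup

theorem sub_mem_zmultiples_two_nsmul {G : Type*} [AddCommGroup G] [IsAddTorsionFree G] {t h : G}
    (ht : 2 • t ∈ zmultiples (2 • h)) (ht' : t ∉ zmultiples (2 • h)) :
    t - h ∈ zmultiples (2 • h) := by
  obtain ⟨k, hk⟩ := mem_zmultiples_iff.1 ht
  obtain rfl : k • h = t := nsmul_right_injective two_ne_zero ((smul_comm 2 k h).trans hk)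
  obtain ⟨m, rfl | rfl⟩ := k.even_or_odd'
  · exact absurd (mem_zmultiples_iff.2 ⟨m, by module⟩) ht'
  · exact mem_zmultiples_iff.2 ⟨m, by module⟩

section Equivariance

variable {G α : Type*} {σ : α → α} {x : α}

theorem two_nsmul_vadd_eq_self_of_map_eq_vadd [AddMonoid G] [AddAction G α] {t : G}
    (hσ : σ (t +ᵥ x) = t +ᵥ σ x) (hσσ : σ (σ x) = x) (hx : σ x = t +ᵥ x) :
    (2 • t) +ᵥ x = x := by
  calc (2 • t) +ᵥ x = t +ᵥ σ x := by rw [two_nsmul, add_vadd, hx]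
    _ = σ (σ x) := by rw [← hσ, ← hx]
    _ = x := hσσ

theorem map_eq_vadd_of_mem_orbit [AddCommMonoid G] [AddAction G α] {h : G}
    (hσ : ∀ s : G, σ (s +ᵥ x) = s +ᵥ σ x) (hx : σ x = h +ᵥ x) {z : α} (hz : z ∈ orbit G x) :
    σ z = h +ᵥ z := by
  obtain ⟨s, rfl⟩ := hz
  rw [hσ, hx, vadd_comm]

theorem symmetric_flow_half_period_symmetry_general [AddCommGroup G] [LinearOrder G]
    [IsOrderedAddMonoid G] [Archimedean G] [AddAction G α] {T h : G}
    (hσ : ∀ s : G, σ (s +ᵥ x) = s +ᵥ σ x) (hσσ : σ (σ x) = x)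
    (hT : IsLeast {s : G | s ∈ stabilizer G x ∧ 0 < s} T) (hh : 2 • h = T)
    (hrel : ∃ t : G, σ x = t +ᵥ x ∧ t +ᵥ x ≠ x) :
    ∀ z ∈ orbit G x, σ z = h +ᵥ z := by
  subst hh
  obtain ⟨t, hx, hne⟩ := hrel
  have hstab : stabilizer G x = zmultiples (2 • h) := by
    rw [zmultiples_eq_closure, cyclic_of_min hT]
  have hshift : t - h ∈ stabilizer G x := by
    rw [hstab]
    apply sub_mem_zmultiples_two_nsmul
    · exact hstab ▸ two_nsmul_vadd_eq_self_of_map_eq_vadd (hσ t) hσσ hx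
    · exact hstab ▸ hne
  have hhalf : σ x = h +ᵥ x := by
    rw [hx, ← add_sub_cancel h t, add_vadd, mem_stabilizer_iff.1 hshift]
  exact fun _ hz ↦ map_eq_vadd_of_mem_orbit hσ hhalf hz

end Equivariance

theorem symmetric_flow_half_period_symmetry
    {n : ℕ} (φ : ℝ → (Fin n → ℝ) → (Fin n → ℝ)) (σ : (Fin n → ℝ) → (Fin n → ℝ))
    (hφ0 : ∀ z, φ 0 z = z)
    (hφadd : ∀ s t z, φ (s + t) z = φ s (φ t z))
    (hinv : ∀ z, σ (σ z) = z)
    (hsym : ∀ t z, σ (φ t z) = φ t (σ z))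
    (zplus : Fin n → ℝ) (T : ℝ) (hT : 0 < T)
    (hper : φ T zplus = zplus)
    (hmin : ∀ t, 0 < t → t < T → φ t zplus ≠ zplus)
    (hrel : ∃ t : ℝ, σ zplus = φ t zplus ∧ φ t zplus ≠ zplus) :
    ∀ z ∈ Set.range (fun t => φ t zplus), σ z = φ (T / 2) z := by
  let _ : AddAction ℝ (Fin n → ℝ) := { vadd := φ, zero_vadd := hφ0, add_vadd := hφadd }
  have hperiod : IsLeast {s : ℝ | s ∈ stabilizer ℝ zplus ∧ 0 < s} T :=
    ⟨⟨hper, hT⟩, fun s ⟨hs, hs_pos⟩ ↦ not_lt.1 fun hsT ↦ hmin s hs_pos hsT hs⟩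
  exact symmetric_flow_half_period_symmetry_general (hsym · zplus) (hinv zplus) hperiod
    (by rw [two_nsmul, add_halves]) hrel
end

section
/- Let φ : ℝ × ℝⁿ → ℝⁿ be a continuous flow that is σ-symmetric for an involution σ, let z* be a point with φ(T, z*) = z* for some T > 0 satisfying σ(z*) = φ(T/2, z*), and let α : ℝⁿ → ℝ be a continuous σ-compatible function with α(φ(t,z*)) > 0 for all t. Then ∫₀ᵀ (1/α(φ(t, z*)) − 1) dt = 0; equivalently, ∫₀ᵀ 1/α(φ(t, z*)) dt = T. -/
/-!
Along the orbit, `σ` acts as translation of time by `T / 2`, and at a point where neither side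
vanishes the compatibility condition reads `1 / α + 1 / (α ∘ σ) = 2`. Hence `1 / α - 1` changes sign
under time translation by `T / 2`, so its integral over the period `T` is its own negative.
-/

theorem intervalIntegral_eq_zero_of_antiperiodic {E : Type*} [NormedAddCommGroup E]
    [NormedSpace ℝ E] {f : ℝ → E} {c : ℝ} (hf : Function.Antiperiodic f c) (a : ℝ) :
    ∫ t in a..a + 2 * c, f t = 0 := by
  have : IsAddTorsionFree E := .of_isTorsionFree ℝ E
  refine self_eq_neg.mp ?_
  calc ∫ t in a..a + 2 * c, f t
      = ∫ t in a + c..a + c + 2 * c, f t := hf.periodic_two_mul.intervalIntegral_add_eq _ _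
    _ = ∫ t in a..a + 2 * c, f (t + c) := by
      rw [intervalIntegral.integral_comp_add_right, add_right_comm]
    _ = -∫ t in a..a + 2 * c, f t := by simp only [hf _, intervalIntegral.integral_neg]

theorem one_div_add_one_div_eq_of_add_eq_mul {K : Type*} [Semifield K] {a b c : K} (ha : a ≠ 0)
    (hb : b ≠ 0) (h : a + b = c * a * b) : 1 / a + 1 / b = c := by
  rw [one_div_add_one_div ha hb, h, mul_assoc, mul_div_cancel_right₀ c (mul_ne_zero ha hb)]

theorem antiperiodic_one_div_sub_one_of_compat {A X K : Type*} [Add A] [Field K] {γ : A → X}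
    {σ : X → X} {α : X → K} {c : A} (hγ : ∀ t, σ (γ t) = γ (t + c))
    (hcompat : ∀ x, α x + α (σ x) = 2 * α x * α (σ x)) (hne : ∀ t, α (γ t) ≠ 0) :
    Function.Antiperiodic (fun t => 1 / α (γ t) - 1) c := by
  intro t
  have hsum : 1 / α (γ t) + 1 / α (γ (t + c)) = 2 :=
    one_div_add_one_div_eq_of_add_eq_mul (hne t) (hne (t + c)) (hγ t ▸ hcompat (γ t))
  linear_combination hsum

theorem map_flow_eq_flow_add {A X : Type*} [Add A] {φ : A → X → X} {σ : X → X}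
    (hadd : ∀ s t x, φ (s + t) x = φ s (φ t x)) (hsym : ∀ t x, σ (φ t x) = φ t (σ x))
    {x : X} {c : A} (hx : σ x = φ c x) (t : A) : σ (φ t x) = φ (t + c) x := by
  rw [hsym, hx, hadd]

theorem symmetric_flow_integral_compat_general {X : Type*} {γ : ℝ → X} {σ : X → X} {α : X → ℝ}
    {T : ℝ} (hγ : ∀ t, σ (γ t) = γ (t + T / 2))
    (hcompat : ∀ x, α x + α (σ x) = 2 * α x * α (σ x)) (hne : ∀ t, α (γ t) ≠ 0)
    (hint : IntervalIntegrable (fun t => 1 / α (γ t)) MeasureTheory.volume 0 T) :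
    (∫ t in (0 : ℝ)..T, (1 / α (γ t) - 1)) = 0 ∧ (∫ t in (0 : ℝ)..T, 1 / α (γ t)) = T := by
  have hzero : ∫ t in (0 : ℝ)..T, (1 / α (γ t) - 1) = 0 := by
    simpa only [zero_add, mul_div_cancel₀ T two_ne_zero] using
      intervalIntegral_eq_zero_of_antiperiodic
        (antiperiodic_one_div_sub_one_of_compat hγ hcompat hne) 0
  have hsub : ∫ t in (0 : ℝ)..T, (1 / α (γ t) - 1) = (∫ t in (0 : ℝ)..T, 1 / α (γ t)) - T := by
    rw [intervalIntegral.integral_sub hint intervalIntegrable_const, integral_one, sub_zero]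
  exact ⟨hzero, sub_eq_zero.mp (hsub.symm.trans hzero)⟩

theorem symmetric_flow_integral_compat
    {n : ℕ} (φ : ℝ → (Fin n → ℝ) → (Fin n → ℝ)) (σ : (Fin n → ℝ) → (Fin n → ℝ))
    (hφcont : Continuous (fun p : ℝ × (Fin n → ℝ) => φ p.1 p.2))
    (hφ0 : ∀ z, φ 0 z = z)
    (hφadd : ∀ s t z, φ (s + t) z = φ s (φ t z))
    (hinv : ∀ z, σ (σ z) = z)
    (hsym : ∀ t z, σ (φ t z) = φ t (σ z))
    (zstar : Fin n → ℝ) (T : ℝ) (hT : 0 < T)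
    (hper : φ T zstar = zstar)
    (hhalf : σ zstar = φ (T / 2) zstar)
    (α : (Fin n → ℝ) → ℝ) (hαcont : Continuous α)
    (hcompat : ∀ z, α z + α (σ z) = 2 * α z * α (σ z))
    (hpos : ∀ t : ℝ, 0 < α (φ t zstar)) :
    (∫ t in (0:ℝ)..T, (1 / α (φ t zstar) - 1)) = 0 ∧
    (∫ t in (0:ℝ)..T, 1 / α (φ t zstar)) = T := by
  have hcont : Continuous fun t => 1 / α (φ t zstar) :=
    continuous_const.div (hαcont.comp (hφcont.comp (.prodMk_left zstar))) fun t => (hpos t).ne'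
  exact symmetric_flow_integral_compat_general (map_flow_eq_flow_add hφadd hsym hhalf) hcompat
    (fun t => (hpos t).ne') (hcont.intervalIntegrable 0 T)
end

section
/- Let γ = (x, y) : ℝ → ℝ² be a T-periodic solution (T > 0) of the planar system ẋ = y(1 − x²), ẏ = −x(1 − x²), with x(t) ∈ (−1, 1) for all t and with x(0) = 0 (the orbit meets the y-axis at γ(0)) and γ(T/2) = (−x(T/2-shifted)...). Precisely: assume γ'(t) = (y(t)(1 − x(t)²), −x(t)(1 − x(t)²)), γ(t+T) = γ(t), |x(t)| < 1 for all t, and σ(γ(0)) = γ(0) where σ(x,y) = (−x,y). Then ∫₀ᵀ (1 + x(t)) dt = T, and consequently there exists a T-periodic solution of the system ẋ = y(1 − x), ẏ = −x(1 − x) with the same image as γ. -/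
/-!
Along an orbit `x ^ 2 + y ^ 2` is a constant `c`, so `1 - x ^ 2 = 1 - c + y ^ 2` and
`x dt = -dy / (1 - x ^ 2) = -dy / (1 - c + y ^ 2)` is an exact differential in `y` alone. Hence `x`
has integral `0` over a period. The new time `s = ∫ (1 + x) dt` therefore advances by exactly `T`
when `t` does, and `γ` reparametrized by `s` solves the system divided by `1 + x`.
-/

open Set Filter Function

section TimeChange

variable {T : ℝ}

theorem exists_orderIso_hasDerivAt_inv_of_periodic_pos {f : ℝ → ℝ} (hf : Continuous f)
    (hpos : ∀ t, 0 < f t) (hper : Periodic f T) (hT : 0 < T) :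
    ∃ τ : ℝ ≃o ℝ, (∀ s, HasDerivAt τ (f (τ s))⁻¹ s) ∧
      ∀ s, τ (s + ∫ t in 0..T, f t) = τ s + T := by
  set F : ℝ → ℝ := fun t => ∫ u in 0..t, f u
  have hF : ∀ t, HasDerivAt F (f t) t := fun t => (hf.integral_hasStrictDerivAt 0 t).hasDerivAt
  have hfi : ∀ a b, IntervalIntegrable f MeasureTheory.volume a b := hf.intervalIntegrable
  have hmono : StrictMono F := strictMono_of_hasDerivAt_pos hF hpos
  have hsurj : Surjective F :=
    (continuous_iff_continuousAt.2 fun t => (hF t).continuousAt).surjective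
      (hper.tendsto_atTop_intervalIntegral_of_pos' (hfi 0 T) hpos hT)
      (hper.tendsto_atBot_intervalIntegral_of_pos' (hfi 0 T) hpos hT)
  have hshift : ∀ t, F (t + T) = F t + F T := fun t => by
    simpa only [zero_add] using hper.intervalIntegral_add_eq_add 0 t hfi
  let e := hmono.orderIsoOfSurjective F hsurj
  have hFe : ∀ s, F (e.symm s) = s := e.apply_symm_apply
  refine ⟨e.symm, fun s => ?_, fun s => hmono.injective ?_⟩
  · exact (hF (e.symm s)).of_local_left_inverse e.symm.continuous.continuousAt (hpos _).ne'
      (Eventually.of_forall hFe)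
  · rw [hshift, hFe, hFe]

theorem exists_periodic_solution_of_smul {E : Type*} [NormedAddCommGroup E] [NormedSpace ℝ E]
    {γ : ℝ → E} {W : E → E} {ρ : E → ℝ} (hγ : ∀ t, HasDerivAt γ (ρ (γ t) • W (γ t)) t)
    (hρ : Continuous fun t => ρ (γ t)) (hpos : ∀ t, 0 < ρ (γ t)) (hper : Periodic γ T)
    (hT : 0 < T) :
    ∃ η : ℝ → E, (∀ s, HasDerivAt η (W (η s)) s) ∧
      Periodic η (∫ t in 0..T, ρ (γ t)) ∧ range η = range γ := by
  obtain ⟨τ, hτ, hshift⟩ :=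
    exists_orderIso_hasDerivAt_inv_of_periodic_pos hρ hpos (hper.comp ρ) hT
  refine ⟨γ ∘ τ, fun s => ?_, fun s => ?_, τ.surjective.range_comp γ⟩
  · exact ((hγ (τ s)).scomp s (hτ s)).congr_deriv (inv_smul_smul₀ (hpos _).ne' _)
  · rw [comp_apply, hshift, hper, comp_apply]

end TimeChange

section Rotation

variable {x y : ℝ → ℝ}

theorem sq_add_sq_eq_of_rotation {ω : ℝ → ℝ} (hx : ∀ t, HasDerivAt x (y t * ω t) t)
    (hy : ∀ t, HasDerivAt y (-x t * ω t) t) (s t : ℝ) :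
    x s ^ 2 + y s ^ 2 = x t ^ 2 + y t ^ 2 := by
  have hderiv : ∀ t, HasDerivAt (fun t => x t ^ 2 + y t ^ 2) 0 t := fun t =>
    (((hx t).pow 2).add ((hy t).pow 2)).congr_deriv (by push_cast; ring)
  exact is_const_of_deriv_eq_zero (fun t => (hderiv t).differentiableAt)
    (fun t => (hderiv t).deriv) s t

-- Making the speed `f` a function of `x ^ 2` and `y` encodes reversibility under `x ↦ -x`;
-- on the circle `x ^ 2 + y ^ 2 = c` it is then the function `f (c - y ^ 2, y)` of `y`.
theorem integral_eq_zero_of_reversible_rotation {f : ℝ × ℝ → ℝ} {a b : ℝ} (hf : Continuous f)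
    (hx : ∀ t, HasDerivAt x (y t * f (x t ^ 2, y t)) t)
    (hy : ∀ t, HasDerivAt y (-x t * f (x t ^ 2, y t)) t)
    (hne : ∀ t, f (x t ^ 2, y t) ≠ 0) (hab : y a = y b) :
    ∫ t in a..b, x t = 0 := by
  have hxc : Continuous x := continuous_iff_continuousAt.2 fun t => (hx t).continuousAt
  have hyc : Continuous y := continuous_iff_continuousAt.2 fun t => (hy t).continuousAt
  set c := x a ^ 2 + y a ^ 2
  have hsq : ∀ t, c - y t ^ 2 = x t ^ 2 := fun t =>
    sub_eq_of_eq_add (sq_add_sq_eq_of_rotation hx hy a t)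
  let g : ℝ → ℝ := fun v => -(f (c - v ^ 2, v))⁻¹
  have hg : ContinuousOn g (y '' uIcc a b) := by
    refine (ContinuousOn.inv₀ (by fun_prop) ?_).neg
    rintro _ ⟨t, -, rfl⟩
    rw [hsq]
    exact hne t
  have hexact : ∀ t, x t = (g ∘ y) t * (-x t * f (x t ^ 2, y t)) := fun t => by
    have := hne t
    simp only [g, comp_apply, hsq]
    field_simp
  calc
    ∫ t in a..b, x t = ∫ t in a..b, (g ∘ y) t * (-x t * f (x t ^ 2, y t)) :=
      intervalIntegral.integral_congr fun t _ => hexact t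
    _ = ∫ v in y a..y b, g v :=
      intervalIntegral.integral_comp_mul_deriv' (fun t _ => hy t) (by fun_prop) hg
    _ = 0 := by rw [hab, intervalIntegral.integral_same]

end Rotation

theorem integral_one_add_fst_eq_period {γ : ℝ → ℝ × ℝ} {T : ℝ}
    (hsol : ∀ t, HasDerivAt γ
      ((γ t).2 * (1 - (γ t).1 ^ 2), -(γ t).1 * (1 - (γ t).1 ^ 2)) t)
    (hper : Periodic γ T) (hstrip : ∀ t, |(γ t).1| < 1) :
    ∫ t in 0..T, (1 + (γ t).1) = T := by
  have hγ : Continuous γ := continuous_iff_continuousAt.2 fun t => (hsol t).continuousAt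
  have hx : ∀ t, HasDerivAt (fun t => (γ t).1) ((γ t).2 * (1 - (γ t).1 ^ 2)) t := fun t =>
    (hasFDerivAt_fst (𝕜 := ℝ) (p := γ t)).comp_hasDerivAt t (hsol t)
  have hy : ∀ t, HasDerivAt (fun t => (γ t).2) (-(γ t).1 * (1 - (γ t).1 ^ 2)) t := fun t =>
    (hasFDerivAt_snd (𝕜 := ℝ) (p := γ t)).comp_hasDerivAt t (hsol t)
  have hne : ∀ t, 1 - (γ t).1 ^ 2 ≠ 0 := fun t =>
    (sub_pos.2 ((sq_lt_one_iff_abs_lt_one _).2 (hstrip t))).ne'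
  have hmean : ∫ t in 0..T, (γ t).1 = 0 :=
    integral_eq_zero_of_reversible_rotation (f := fun p => 1 - p.1) (by fun_prop) hx hy hne
      (congrArg Prod.snd hper.eq.symm)
  rw [intervalIntegral.integral_add intervalIntegrable_const
    (hγ.fst.intervalIntegrable 0 T), hmean]
  simp only [intervalIntegral.integral_const, sub_zero, smul_eq_mul, mul_one, add_zero]

theorem equal_period_reversible_example_general
    (γ : ℝ → ℝ × ℝ) (T : ℝ) (hT : 0 < T)
    (hsol : ∀ t, HasDerivAt γ
      ((γ t).2 * (1 - (γ t).1 ^ 2), -(γ t).1 * (1 - (γ t).1 ^ 2)) t)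
    (hper : ∀ t, γ (t + T) = γ t)
    (hstrip : ∀ t, |(γ t).1| < 1) :
    (∫ t in (0:ℝ)..T, (1 + (γ t).1)) = T ∧
    ∃ η : ℝ → ℝ × ℝ,
      (∀ s, HasDerivAt η
        ((η s).2 * (1 - (η s).1), -(η s).1 * (1 - (η s).1)) s) ∧
      (∀ s, η (s + T) = η s) ∧
      Set.range η = Set.range γ := by
  have hT' := integral_one_add_fst_eq_period hsol hper hstrip
  have hγ : Continuous γ := continuous_iff_continuousAt.2 fun t => (hsol t).continuousAt
  have hfactor : ∀ t, HasDerivAt γ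
      ((1 + (γ t).1) • ((γ t).2 * (1 - (γ t).1), -(γ t).1 * (1 - (γ t).1))) t := fun t =>
    (hsol t).congr_deriv (by ext <;> simp only [Prod.smul_mk, smul_eq_mul] <;> ring)
  obtain ⟨η, hη, hηper, hrange⟩ := exists_periodic_solution_of_smul
    (W := fun z => (z.2 * (1 - z.1), -z.1 * (1 - z.1))) (ρ := fun z => 1 + z.1) hfactor
    (by fun_prop) (fun t => by linarith [(abs_lt.1 (hstrip t)).1]) hper hT
  rw [hT'] at hηper
  exact ⟨hT', η, hη, hηper, hrange⟩

theorem equal_period_reversible_example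
    (γ : ℝ → ℝ × ℝ) (T : ℝ) (hT : 0 < T)
    (hsol : ∀ t, HasDerivAt γ
      ((γ t).2 * (1 - (γ t).1 ^ 2), -(γ t).1 * (1 - (γ t).1 ^ 2)) t)
    (hper : ∀ t, γ (t + T) = γ t)
    (hstrip : ∀ t, |(γ t).1| < 1)
    (hfix : ((-(γ 0).1, (γ 0).2) : ℝ × ℝ) = γ 0) :
    (∫ t in (0:ℝ)..T, (1 + (γ t).1)) = T ∧
    ∃ η : ℝ → ℝ × ℝ,
      (∀ s, HasDerivAt η
        ((η s).2 * (1 - (η s).1), -(η s).1 * (1 - (η s).1)) s) ∧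
      (∀ s, η (s + T) = η s) ∧
      Set.range η = Set.range γ :=
  equal_period_reversible_example_general γ T hT hsol hper hstrip
end

section
/- Let γ = (x, y) : ℝ → ℝ² be a solution of the planar system ẋ = y(1 − (x+y)²), ẏ = −x(1 − (x+y)²) with minimal period T > 0, such that |x(t) + y(t)| < 1 for all t and γ(T/2) = −γ(0) (the orbit is symmetric with respect to the origin, with antipodal points reached after half a period). Then ∫₀ᵀ (1 + x(t) + y(t)) dt = T, and consequently there exists a T-periodic solution of the system ẋ = y(1 − x − y), ẏ = −x(1 − x − y) with the same image as γ. -/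
/-!
If `V` commutes with a linear involution `σ`, then `t ↦ γ (t + T / 2)` and `t ↦ σ (γ t)` solve the
same initial value problem, so `γ (t + T / 2) = σ (γ t)` for all `t`. A `σ`-odd function `δ` is
therefore antiperiodic along `γ`, its integral over a period vanishes, and the new time
`s = ∫ (1 + δ (γ t)) dt`, which turns solutions of `V` into solutions of `V / (1 + δ)`, advances by
exactly `T` over one period.
-/

open Function Set

section Integral

theorem integral_eq_zero_of_antiperiodic {F : Type*} [NormedAddCommGroup F] [NormedSpace ℝ F]
    {f : ℝ → F} {c : ℝ} (hf : Antiperiodic f c) (a : ℝ) :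
    ∫ t in a..a + 2 * c, f t = 0 := by
  have : IsAddTorsionFree F := .of_isTorsionFree ℝ F
  refine self_eq_neg.mp ?_
  calc ∫ t in a..a + 2 * c, f t
    _ = ∫ t in a + c..a + c + 2 * c, f t := hf.periodic_two_mul.intervalIntegral_add_eq _ _
    _ = ∫ t in a..a + 2 * c, f (t + c) := by
      rw [intervalIntegral.integral_comp_add_right, add_right_comm]
    _ = -∫ t in a..a + 2 * c, f t := by
      simp only [hf _, intervalIntegral.integral_neg]

theorem exists_orderIso_eq_integral {ρ : ℝ → ℝ} {T : ℝ} (hρ : Continuous ρ)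
    (hpos : ∀ t, 0 < ρ t) (hper : Periodic ρ T) (hT : 0 < T) :
    ∃ e : ℝ ≃o ℝ, ∀ t, e t = ∫ u in 0..t, ρ u := by
  let S : ℝ → ℝ := fun t ↦ ∫ u in 0..t, ρ u
  have hS : ∀ t, HasDerivAt S (ρ t) t := fun t ↦ (hρ.integral_hasStrictDerivAt 0 t).hasDerivAt
  have hmono : StrictMono S := strictMono_of_deriv_pos fun t ↦ (hS t).deriv ▸ hpos t
  have hcont : Continuous S := continuous_iff_continuousAt.mpr fun t ↦ (hS t).continuousAt
  have hint := hρ.intervalIntegrable (μ := MeasureTheory.volume) 0 T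
  have hsurj : Surjective S := hcont.surjective
    (hper.tendsto_atTop_intervalIntegral_of_pos' hint hpos hT)
    (hper.tendsto_atBot_intervalIntegral_of_pos' hint hpos hT)
  exact ⟨hmono.orderIsoOfSurjective S hsurj, fun _ ↦ rfl⟩

end Integral

section IntegralCurve

variable {E : Type*} [NormedAddCommGroup E] [NormedSpace ℝ E] {V W : E → E} {γ γ' : ℝ → E}

theorem isIntegralCurve_eq_of_locallyLipschitz (hV : LocallyLipschitz V)
    (hγ : IsIntegralCurve γ fun _ ↦ V) (hγ' : IsIntegralCurve γ' fun _ ↦ V) {t₀ : ℝ}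
    (h₀ : γ t₀ = γ' t₀) : γ = γ' := by
  ext t
  obtain ⟨a, b, ht, ht₀⟩ : ∃ a b, t ∈ Ioo a b ∧ t₀ ∈ Ioo a b :=
    ⟨min t t₀ - 1, max t t₀ + 1, by grind, by grind⟩
  let K : Set E := γ '' Icc a b ∪ γ' '' Icc a b
  have hK : IsCompact K :=
    (isCompact_Icc.image hγ.continuous).union (isCompact_Icc.image hγ'.continuous)
  obtain ⟨L, hL⟩ := hV.locallyLipschitzOn.exists_lipschitzOnWith_of_compact hK
  exact ODE_solution_unique_of_mem_Ioo (fun _ _ ↦ hL) ht₀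
    (fun u hu ↦ ⟨hγ u, .inl (mem_image_of_mem γ (Ioo_subset_Icc_self hu))⟩)
    (fun u hu ↦ ⟨hγ' u, .inr (mem_image_of_mem γ' (Ioo_subset_Icc_self hu))⟩) h₀ ht

theorem isIntegralCurve_comp_of_semiconj {F : Type*} [NormedAddCommGroup F] [NormedSpace ℝ F]
    {U : F → F} {σ : E →L[ℝ] F} (hσ : Semiconj σ V U) (hγ : IsIntegralCurve γ fun _ ↦ V) :
    IsIntegralCurve (σ ∘ γ) fun _ ↦ U := fun t ↦
  (σ.hasFDerivAt.comp_hasDerivAt t (hγ t)).congr_deriv (hσ (γ t))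

theorem apply_add_eq_of_semiconj {σ : E →L[ℝ] E} {c : ℝ} (hV : LocallyLipschitz V)
    (hσ : Semiconj σ V V) (hγ : IsIntegralCurve γ fun _ ↦ V) (hc : γ c = σ (γ 0)) (t : ℝ) :
    γ (t + c) = σ (γ t) :=
  congrFun (isIntegralCurve_eq_of_locallyLipschitz hV (hγ.comp_add c)
    (isIntegralCurve_comp_of_semiconj hσ hγ) (t₀ := 0) (by simpa using hc)) t

theorem isIntegralCurve_comp_orderIso_symm {ρ : ℝ → ℝ} {e : ℝ ≃o ℝ}
    (hγ : IsIntegralCurve γ fun t ↦ ρ t • W) (he : ∀ t, HasDerivAt e (ρ t) t)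
    (hρ : ∀ t, ρ t ≠ 0) : IsIntegralCurve (γ ∘ e.symm) fun _ ↦ W := by
  intro s
  have he_symm : HasDerivAt e.symm (ρ (e.symm s))⁻¹ s :=
    (he _).of_local_left_inverse e.symm.continuous.continuousAt (hρ _)
      (.of_forall e.apply_symm_apply)
  exact ((hγ _).scomp s he_symm).congr_deriv (inv_smul_smul₀ (hρ _) _)

theorem exists_isIntegralCurve_periodic_integral {ρ : ℝ → ℝ} {T : ℝ}
    (hγ : IsIntegralCurve γ fun t ↦ ρ t • W) (hρ : Continuous ρ) (hpos : ∀ t, 0 < ρ t)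
    (hγ_per : Periodic γ T) (hρ_per : Periodic ρ T) (hT : 0 < T) :
    ∃ η : ℝ → E, IsIntegralCurve η (fun _ ↦ W) ∧ Periodic η (∫ t in 0..T, ρ t) ∧
      range η = range γ := by
  obtain ⟨e, he⟩ := exists_orderIso_eq_integral hρ hpos hρ_per hT
  have he_deriv : ∀ t, HasDerivAt e (ρ t) t := fun t ↦
    (hρ.integral_hasStrictDerivAt 0 t).hasDerivAt.congr_of_eventuallyEq (.of_forall he)
  have he_add : ∀ t, e (t + T) = e t + ∫ u in 0..T, ρ u := fun t ↦ by
    simpa only [he, zero_add] using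
      hρ_per.intervalIntegral_add_eq_add 0 t fun _ _ ↦ hρ.intervalIntegrable _ _
  have he_symm_add : ∀ s, e.symm (s + ∫ u in 0..T, ρ u) = e.symm s + T := fun s ↦ by
    rw [OrderIso.symm_apply_eq, he_add, e.apply_symm_apply]
  refine ⟨γ ∘ e.symm, isIntegralCurve_comp_orderIso_symm hγ he_deriv fun t ↦ (hpos t).ne',
    fun s ↦ ?_, e.symm.surjective.range_comp γ⟩
  rw [comp_apply, comp_apply, he_symm_add, hγ_per]

theorem equal_period_symmetric_example_general {σ : E →L[ℝ] E} {δ : E → ℝ} {T : ℝ}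
    (hσ : Involutive σ) (hV : LocallyLipschitz V) (hσV : Semiconj σ V V)
    (hδ : Continuous δ) (hσδ : ∀ z, δ (σ z) = -δ z) (hVW : ∀ z, V z = (1 + δ z) • W z)
    (hT : 0 < T) (hγ : IsIntegralCurve γ fun _ ↦ V) (hstrip : ∀ t, -1 < δ (γ t))
    (hhalf : γ (T / 2) = σ (γ 0)) :
    (∫ t in 0..T, (1 + δ (γ t))) = T ∧
    ∃ η : ℝ → E, IsIntegralCurve η (fun _ ↦ W) ∧ Periodic η T ∧ range η = range γ := by
  have hshift : ∀ t, γ (t + T / 2) = σ (γ t) := apply_add_eq_of_semiconj hV hσV hγ hhalf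
  have hper : Periodic γ T := fun t ↦ by
    rw [← add_halves T, ← add_assoc, hshift, hshift, hσ]
  have hanti : Antiperiodic (fun t ↦ δ (γ t)) (T / 2) := fun t ↦ by simp only [hshift, hσδ]
  have hδγ : Continuous fun t ↦ δ (γ t) := hδ.comp hγ.continuous
  have hint : ∫ t in 0..T, (1 + δ (γ t)) = T := by
    have hzero : ∫ t in 0..T, δ (γ t) = 0 := by
      simpa [mul_div_cancel₀] using integral_eq_zero_of_antiperiodic hanti 0
    rw [intervalIntegral.integral_add intervalIntegrable_const (hδγ.intervalIntegrable _ _)]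
    simp [hzero]
  have hγW : IsIntegralCurve γ fun t ↦ (1 + δ (γ t)) • W := fun t ↦ (hγ t).congr_deriv (hVW _)
  refine ⟨hint, ?_⟩
  simpa only [hint] using exists_isIntegralCurve_periodic_integral hγW
    (continuous_const.add hδγ) (fun t ↦ neg_lt_iff_pos_add'.mp (hstrip t)) hper
    (hper.comp fun z ↦ 1 + δ z) hT

end IntegralCurve

section PlanarExample

/-- The vector field of the `σ`-symmetric system `ẋ = y (1 - (x + y)²)`, `ẏ = -x (1 - (x + y)²)`,
where `σ z = -z`. -/
def cubicField (z : ℝ × ℝ) : ℝ × ℝ :=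
  (z.2 * (1 - (z.1 + z.2) ^ 2), -z.1 * (1 - (z.1 + z.2) ^ 2))

/-- The vector field of the system `ẋ = y (1 - x - y)`, `ẏ = -x (1 - x - y)`, that is,
`α • cubicField` for `α = 1 / (1 + x + y)` with the removable singularity of `α` filled in. -/
def quadraticField (z : ℝ × ℝ) : ℝ × ℝ :=
  (z.2 * (1 - z.1 - z.2), -z.1 * (1 - z.1 - z.2))

theorem locallyLipschitz_cubicField : LocallyLipschitz cubicField :=
  ContDiff.locallyLipschitz (𝕂 := ℝ) (by unfold cubicField; fun_prop)

theorem semiconj_neg_cubicField : Semiconj (-1 : ℝ × ℝ →L[ℝ] ℝ × ℝ) cubicField cubicField := by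
  intro z
  ext <;> simp only [cubicField, neg_apply, one_apply_eq_self, Prod.fst_neg, Prod.snd_neg] <;> ring

theorem cubicField_eq_smul_quadraticField (z : ℝ × ℝ) :
    cubicField z = (1 + (z.1 + z.2)) • quadraticField z := by
  ext <;> simp only [cubicField, quadraticField, Prod.smul_fst, Prod.smul_snd, smul_eq_mul] <;> ring

end PlanarExample

theorem equal_period_symmetric_example
    (γ : ℝ → ℝ × ℝ) (T : ℝ) (hT : 0 < T)
    (hsol : ∀ t, HasDerivAt γ
      ((γ t).2 * (1 - ((γ t).1 + (γ t).2) ^ 2),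
       -(γ t).1 * (1 - ((γ t).1 + (γ t).2) ^ 2)) t)
    (hper : ∀ t, γ (t + T) = γ t)
    (hmin : ∀ t, 0 < t → t < T → γ t ≠ γ 0)
    (hstrip : ∀ t, |(γ t).1 + (γ t).2| < 1)
    (hhalf : γ (T / 2) = - γ 0) :
    (∫ t in (0:ℝ)..T, (1 + (γ t).1 + (γ t).2)) = T ∧
    ∃ η : ℝ → ℝ × ℝ,
      (∀ s, HasDerivAt η
        ((η s).2 * (1 - (η s).1 - (η s).2),
         -(η s).1 * (1 - (η s).1 - (η s).2)) s) ∧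
      (∀ s, η (s + T) = η s) ∧
      Set.range η = Set.range γ := by
  simp only [add_assoc]
  exact equal_period_symmetric_example_general (σ := -1) (δ := fun z ↦ z.1 + z.2)
    (neg_neg (G := ℝ × ℝ)) locallyLipschitz_cubicField semiconj_neg_cubicField (by fun_prop)
    (fun z ↦ (neg_add z.1 z.2).symm) cubicField_eq_smul_quadraticField hT hsol
    (fun t ↦ (abs_lt.mp (hstrip t)).1) hhalf
end
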